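/- Every continuous unital ℂ-algebra homomorphism μ : A(D) → ℂ is a Dirac measure: there exists a unique point z₀ ∈ D such that μ(f) = f(z₀) for all f ∈ A(D). -/

import Mathlib

/-!
The value of a character at `f` lies in the range of `f`, since a nowhere vanishing element of the
algebra is invertible; hence characters are contractive, and `μ` sends the coordinate function to
some `z₀ ∈ D`. If `f` extends to be differentiable at `z₀`, then `z - z₀` divides `f - f z₀`, so
`μ f = f z₀`. This applies to the dilates `z ↦ f (w * z)` with `‖w‖ < 1`; let `w` tend to `1`.
-/

noncomputable section
open Metric MvPolynomial

/-- The closed unit disk `D ⊆ ℂ`. -/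
def Ddisk : Set ℂ := Metric.closedBall 0 1

instance : CompactSpace Ddisk := isCompact_iff_compactSpace.mp (isCompact_closedBall 0 1)

/-- The disk algebra `A(D)`: continuous functions on the closed unit disk that are
holomorphic on the open disk. -/
def diskAlg : Subalgebra ℂ C(Ddisk, ℂ) where
  carrier := {f | ∃ F : ℂ → ℂ, DifferentiableOn ℂ F (Metric.ball (0 : ℂ) 1) ∧ ∀ z : Ddisk, f z = F z}
  mul_mem' := by
    rintro f g ⟨F, hF, hf⟩ ⟨G, hG, hg⟩
    exact ⟨F * G, hF.mul hG, fun z => by simp [hf z, hg z]⟩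
  add_mem' := by
    rintro f g ⟨F, hF, hf⟩ ⟨G, hG, hg⟩
    exact ⟨F + G, hF.add hG, fun z => by simp [hf z, hg z]⟩
  algebraMap_mem' := by
    intro c
    exact ⟨fun _ => c, differentiableOn_const c, fun z => by simp⟩

/-- Multiplication of complex numbers on the closed disk, along which functions are dilated. -/
instance : CommMonoid Ddisk := inferInstanceAs (CommMonoid (closedBall (0 : ℂ) 1))

instance : ContinuousMul Ddisk := inferInstanceAs (ContinuousMul (closedBall (0 : ℂ) 1))

namespace Ddisk

lemma norm_le_one (z : Ddisk) : ‖(z : ℂ)‖ ≤ 1 := mem_closedBall_zero_iff.1 z.2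

lemma coe_mul (w z : Ddisk) : ((w * z : Ddisk) : ℂ) = w * z := rfl

lemma dense_norm_lt_one : Dense {w : Ddisk | ‖(w : ℂ)‖ < 1} := by
  rw [Subtype.dense_iff]
  intro z hz
  refine closure_mono ?_ ((closure_ball (0 : ℂ) one_ne_zero).ge hz)
  intro w hw
  exact ⟨⟨w, ball_subset_closedBall hw⟩, mem_ball_zero_iff.1 hw, rfl⟩

end Ddisk

lemma diffContOnCl_dslope {E : Type*} [NormedAddCommGroup E] [NormedSpace ℂ E] [CompleteSpace E]
    {F : ℂ → E} {s : Set ℂ} {a : ℂ} (hs : IsOpen s) (hF : DiffContOnCl ℂ F s)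
    (ha : DifferentiableAt ℂ F a) : DiffContOnCl ℂ (dslope F a) s where
  differentiableOn := by
    by_cases has : a ∈ s
    · exact (Complex.differentiableOn_dslope (hs.mem_nhds has)).2 hF.differentiableOn
    · exact (differentiableOn_dslope_of_notMem has).2 hF.differentiableOn
  continuousOn := by
    intro z hz
    rcases eq_or_ne z a with rfl | hza
    · exact (continuousAt_dslope_same.2 ha).continuousWithinAt
    · exact (continuousWithinAt_dslope_of_ne hza).2 (hF.continuousOn z hz)

lemma mem_diskAlg_iff {f : C(Ddisk, ℂ)} :
    f ∈ diskAlg ↔ ∃ F : ℂ → ℂ, DiffContOnCl ℂ F (ball 0 1) ∧ ∀ z : Ddisk, f z = F z := by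
  refine ⟨?_, fun ⟨F, hF, hfF⟩ => ⟨F, hF.differentiableOn, hfF⟩⟩
  rintro ⟨F, hF, hfF⟩
  have hcont : ContinuousOn F (closedBall 0 1) :=
    continuousOn_iff_continuous_domRestrict.2 (f.continuous.congr hfF)
  exact ⟨F, ⟨hF, hcont.mono closure_ball_subset_closedBall⟩, hfF⟩

namespace diskAlg

/-- The element of the disk algebra given by a function on `ℂ` that is holomorphic on the open
unit disk and continuous up to the boundary. -/
def ofDiffContOnCl (F : ℂ → ℂ) (hF : DiffContOnCl ℂ F (ball 0 1)) : diskAlg :=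
  ⟨⟨fun z => F z, hF.continuousOn_ball.domRestrict⟩, F, hF.differentiableOn, fun _ => rfl⟩

/-- The coordinate function `z ↦ z`; its image under a character is the point at which
that character evaluates. -/
def coord : diskAlg := ofDiffContOnCl id differentiable_id.diffContOnCl

lemma isUnit_of_forall_ne_zero {f : diskAlg} (hf : ∀ z, (f : C(Ddisk, ℂ)) z ≠ 0) : IsUnit f := by
  obtain ⟨F, hF, hfF⟩ := mem_diskAlg_iff.1 f.2
  have hF0 : ∀ z ∈ closure (ball (0 : ℂ) 1), F z ≠ 0 := fun z hz =>
    hfF ⟨z, closure_ball_subset_closedBall hz⟩ ▸ hf _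
  refine IsUnit.of_mul_eq_one (ofDiffContOnCl F⁻¹ (hF.inv hF0)) ?_
  ext z
  calc (f : C(Ddisk, ℂ)) z * (F z)⁻¹ = (f : C(Ddisk, ℂ)) z * ((f : C(Ddisk, ℂ)) z)⁻¹ := by rw [hfF]
    _ = 1 := mul_inv_cancel₀ (hf z)

lemma spectrum_subset_range (f : diskAlg) : spectrum ℂ f ⊆ Set.range (f : C(Ddisk, ℂ)) := by
  intro c hc
  by_contra hrange
  refine hc (isUnit_of_forall_ne_zero fun z hz => hrange ⟨z, ?_⟩)
  exact (sub_eq_zero.1 hz).symm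

lemma character_apply_mem_range (μ : diskAlg →ₐ[ℂ] ℂ) (f : diskAlg) :
    μ f ∈ Set.range (f : C(Ddisk, ℂ)) :=
  spectrum_subset_range f (AlgHom.apply_mem_spectrum μ f)

lemma norm_character_apply_le (μ : diskAlg →ₐ[ℂ] ℂ) (f : diskAlg) : ‖μ f‖ ≤ ‖f‖ := by
  obtain ⟨z, hz⟩ := character_apply_mem_range μ f
  exact hz ▸ (f : C(Ddisk, ℂ)).norm_coe_le_norm z

lemma continuous_character (μ : diskAlg →ₐ[ℂ] ℂ) : Continuous μ :=
  AddMonoidHomClass.continuous_of_bound μ 1 fun f => by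
    simpa only [one_mul] using norm_character_apply_le μ f

lemma coord_sub_dvd {f : diskAlg} {F : ℂ → ℂ} (hF : DiffContOnCl ℂ F (ball 0 1))
    (hfF : ∀ z : Ddisk, (f : C(Ddisk, ℂ)) z = F z) {a : ℂ} (ha : DifferentiableAt ℂ F a) :
    coord - algebraMap ℂ diskAlg a ∣ f - algebraMap ℂ diskAlg (F a) := by
  refine ⟨ofDiffContOnCl (dslope F a) (diffContOnCl_dslope isOpen_ball hF ha), ?_⟩
  ext z
  calc (f : C(Ddisk, ℂ)) z - F a = F z - F a := by rw [hfF]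
    _ = (z - a) * dslope F a z := (sub_smul_dslope F a z).symm

lemma character_apply_eq_of_differentiableAt (μ : diskAlg →ₐ[ℂ] ℂ) {f : diskAlg} {F : ℂ → ℂ}
    (hF : DiffContOnCl ℂ F (ball 0 1)) (hfF : ∀ z : Ddisk, (f : C(Ddisk, ℂ)) z = F z)
    (hd : DifferentiableAt ℂ F (μ coord)) : μ f = F (μ coord) := by
  have hdvd := map_dvd μ (coord_sub_dvd hF hfF hd)
  simpa only [map_sub, AlgHom.commutes, Algebra.algebraMap_self, RingHom.id_apply, sub_self,
    zero_dvd_iff, sub_eq_zero] using hdvd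

lemma diffContOnCl_comp_const_mul {F : ℂ → ℂ} (hF : DiffContOnCl ℂ F (ball 0 1)) (w : Ddisk) :
    DiffContOnCl ℂ (fun z => F (w * z)) (ball 0 1) := by
  refine hF.comp (differentiable_id.const_mul (w : ℂ)).diffContOnCl fun z hz => ?_
  rw [mem_ball_zero_iff] at hz ⊢
  calc ‖(w : ℂ) * z‖ = ‖(w : ℂ)‖ * ‖z‖ := norm_mul _ _
    _ ≤ ‖z‖ := mul_le_of_le_one_left (norm_nonneg z) (Ddisk.norm_le_one w)
    _ < 1 := hz

/-- The dilate `z ↦ f (w * z)` of `f` by a point `w` of the closed disk. For `‖w‖ < 1` it is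
holomorphic on a neighbourhood of the closed disk. -/
def dilate (f : diskAlg) (w : Ddisk) : diskAlg :=
  ⟨(f : C(Ddisk, ℂ)).comp (ContinuousMap.mulLeft w), by
    obtain ⟨F, hF, hfF⟩ := mem_diskAlg_iff.1 f.2
    exact mem_diskAlg_iff.2 ⟨_, diffContOnCl_comp_const_mul hF w, fun z => hfF (w * z)⟩⟩

lemma dilate_one (f : diskAlg) : dilate f 1 = f := by
  ext z
  exact congrArg (f : C(Ddisk, ℂ)) (one_mul z)

lemma continuous_dilate (f : diskAlg) : Continuous (dilate f) :=
  .subtype_mk (ContinuousMap.continuous_of_continuous_uncurry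
    (fun w => (f : C(Ddisk, ℂ)).comp (ContinuousMap.mulLeft w))
    ((f : C(Ddisk, ℂ)).continuous.comp continuous_mul)) _

lemma character_apply_dilate (μ : diskAlg →ₐ[ℂ] ℂ) {z₀ : Ddisk} (hz₀ : μ coord = z₀) (f : diskAlg)
    {w : Ddisk} (hw : ‖(w : ℂ)‖ < 1) : μ (dilate f w) = (f : C(Ddisk, ℂ)) (w * z₀) := by
  obtain ⟨F, hF, hfF⟩ := mem_diskAlg_iff.1 f.2
  have hmem : (w : ℂ) * z₀ ∈ ball (0 : ℂ) 1 := by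
    rw [mem_ball_zero_iff, norm_mul]
    exact mul_lt_one_of_nonneg_of_lt_one_left (norm_nonneg _) hw (Ddisk.norm_le_one z₀)
  have hd : DifferentiableAt ℂ (fun z => F (w * z)) z₀ :=
    (hF.differentiableAt isOpen_ball hmem).comp _ (differentiableAt_id.const_mul _)
  calc μ (dilate f w) = F (w * μ coord) :=
        character_apply_eq_of_differentiableAt μ (diffContOnCl_comp_const_mul hF w)
          (fun z => hfF (w * z)) (hz₀ ▸ hd)
    _ = (f : C(Ddisk, ℂ)) (w * z₀) := by rw [hz₀, hfF, Ddisk.coe_mul]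

lemma character_apply_eq (μ : diskAlg →ₐ[ℂ] ℂ) {z₀ : Ddisk} (hz₀ : μ coord = z₀) (f : diskAlg) :
    μ f = (f : C(Ddisk, ℂ)) z₀ := by
  have hdilate : (fun w => μ (dilate f w)) = fun w => (f : C(Ddisk, ℂ)) (w * z₀) :=
    Continuous.ext_on Ddisk.dense_norm_lt_one
      ((continuous_character μ).comp (continuous_dilate f)) (by fun_prop)
      fun w hw => character_apply_dilate μ hz₀ f hw
  simpa only [dilate_one, one_mul] using congrFun hdilate 1

end diskAlg

theorem characters_of_disk_algebra_are_Dirac_general (μ : diskAlg →ₐ[ℂ] ℂ) :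
    ∃! z₀ : Ddisk, ∀ f : diskAlg, μ f = (f : C(Ddisk, ℂ)) z₀ := by
  obtain ⟨z₀, hz₀⟩ := diskAlg.character_apply_mem_range μ diskAlg.coord
  refine ⟨z₀, diskAlg.character_apply_eq μ hz₀.symm, fun z hz => Subtype.ext ?_⟩
  exact (hz diskAlg.coord).symm.trans hz₀.symm

/-- Every continuous unital `ℂ`-algebra homomorphism `μ : A(D) → ℂ` is a Dirac measure:
there is a unique `z₀ ∈ D` with `μ(f) = f(z₀)` for all `f ∈ A(D)`. -/
theorem characters_of_disk_algebra_are_Dirac (μ : ↥diskAlg →ₐ[ℂ] ℂ) (hμ : Continuous μ) :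
    ∃! z₀ : ↥Ddisk, ∀ f : ↥diskAlg, μ f = (f : C(Ddisk, ℂ)) z₀ :=
  characters_of_disk_algebra_are_Dirac_general μ
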